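/- The number of tournaments on the 5-element set Fin 5 having no vertex of out-degree 4, no vertex of out-degree 0, exactly one vertex v of out-degree 2, and such that both vertices of out-degree 3 defeat v, is exactly 120. -/

import Mathlib

/-- A tournament: an irreflexive relation such that for distinct vertices exactly one
direction holds. -/
def IsTournament (r : Fin 5 → Fin 5 → Prop) : Prop :=
  (∀ a, ¬ r a a) ∧ ∀ a b : Fin 5, a ≠ b → Xor' (r a b) (r b a)

/-- The out-degree of a vertex: the number of vertices it defeats. -/
noncomputable def outDeg (r : Fin 5 → Fin 5 → Prop) (v : Fin 5) : ℕ :=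
  Nat.card {w : Fin 5 // r v w}

/-!
A tournament in `Γ₁,₁` has scores `3, 3, 2, 1, 1`, because the scores are `1`, `2` or `3`, only one
of them is `2`, and they add up to `10`. Label its vertices `0, …, 4` by decreasing score, with
`0 → 1` and `3 → 4`. The majorization condition gives `0 → 2` and `1 → 2`, and the scores then force
the remaining arcs one at a time: the tournament is the linear order with the arc between its two
ends reversed. So `Γ₁,₁` is a single isomorphism class, and since its members have no nontrivial
automorphism, it contains `5! = 120` tournaments on `Fin 5`.
-/

open Finset

section Relations

variable {α β : Type*}

/-- Orbit–stabilizer: sort the bijections `α ≃ β` by the relation on `α` to which they pull back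
`s`. -/
lemma card_isomorphic_mul_card_automorphism (s : β → β → Prop) :
    Nat.card {r : α → α → Prop // Nonempty (r ≃r s)} * Nat.card (s ≃r s) = Nat.card (α ≃ β) := by
  let fiberEquiv (r : {r : α → α → Prop // Nonempty (r ≃r s)}) : (r.1 ≃r s) ≃ (s ≃r s) :=
    { toFun := fun f => r.2.some.symm.trans f
      invFun := fun g => r.2.some.trans g
      left_inv := fun f => by ext; simp
      right_inv := fun g => by ext; simp }
  let forget (p : Σ r : {r : α → α → Prop // Nonempty (r ≃r s)}, r.1 ≃r s) : α ≃ β := p.2.toEquiv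
  have forget_injective : Function.Injective forget := by
    rintro ⟨⟨r, hr⟩, f⟩ ⟨⟨r', hr'⟩, f'⟩ (h : f.toEquiv = f'.toEquiv)
    obtain rfl : r = r' := by
      ext a b
      calc r a b ↔ s (f.toEquiv a) (f.toEquiv b) := f.map_rel_iff.symm
        _ ↔ s (f'.toEquiv a) (f'.toEquiv b) := by rw [h]
        _ ↔ r' a b := f'.map_rel_iff
    rw [RelIso.toEquiv_injective h]
  have forget_surjective : Function.Surjective forget := fun e =>
    ⟨⟨⟨e ⁻¹'o s, ⟨RelIso.preimage e s⟩⟩, RelIso.preimage e s⟩, rfl⟩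
  rw [← Nat.card_prod, ← Nat.card_congr (Equiv.sigmaEquivProdOfEquiv fiberEquiv)]
  exact Nat.card_congr (Equiv.ofBijective forget ⟨forget_injective, forget_surjective⟩)

lemma rel_or_rel_of_ne (r : α → α → Prop) [Std.Trichotomous r] {a b : α} (hab : a ≠ b) :
    r a b ∨ r b a :=
  (trichotomous_of r a b).imp_right fun h => h.resolve_left hab

lemma eq_of_le_of_trichotomous_of_asymm {r s : α → α → Prop} [Std.Trichotomous r] [Std.Asymm s]
    (hrs : r ≤ s) : r = s := by
  ext a b
  refine ⟨hrs a b, fun hab => ?_⟩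
  rcases trichotomous_of r a b with h | rfl | h
  · exact h
  · exact absurd hab (irrefl a)
  · exact absurd hab (asymm (hrs b a h))

lemma sum_card_filter_eq_choose_two [Fintype α] (r : α → α → Prop) [DecidableRel r]
    [Std.Asymm r] [Std.Trichotomous r] : ∑ a, #{b | r a b} = (Fintype.card α).choose 2 := by
  classical
  have sum_in_eq_sum_out : ∑ a, #{b | r b a} = ∑ a, #{b | r a b} :=
    (sum_card_bipartiteAbove_eq_sum_card_bipartiteBelow r).symm
  have out_add_in (a : α) : #{b | r a b} + #{b | r b a} = Fintype.card α - 1 := by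
    have disjoint : Disjoint (univ.filter (r a ·)) (univ.filter (r · a)) :=
      disjoint_filter.mpr fun b _ hab => asymm hab
    have union : univ.filter (r a ·) ∪ univ.filter (r · a) = univ.erase a := by
      ext b
      simp only [mem_union, mem_filter_univ, mem_erase, mem_univ, and_true]
      exact ⟨fun h => h.elim ne_of_irrefl' ne_of_irrefl, fun h => rel_or_rel_of_ne r h.symm⟩
    rw [← card_union_of_disjoint disjoint, union, card_erase_of_mem (mem_univ a), card_univ]
  have two_mul_sum : 2 * ∑ a, #{b | r a b} = Fintype.card α * (Fintype.card α - 1) := by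
    calc 2 * ∑ a, #{b | r a b} = ∑ a, (#{b | r a b} + #{b | r b a}) := by
          rw [sum_add_distrib, sum_in_eq_sum_out, two_mul]
      _ = Fintype.card α * (Fintype.card α - 1) := by
          simp only [out_add_in, sum_const, card_univ, smul_eq_mul]
  rw [Nat.choose_two_right, ← two_mul_sum, Nat.mul_div_cancel_left _ two_pos]

lemma exists_rel_of_card_eq_two (r : α → α → Prop) [Std.Trichotomous r] {s : Finset α}
    (hs : #s = 2) : ∃ a ∈ s, ∃ b ∈ s, a ≠ b ∧ r a b := by
  classical
  obtain ⟨a, b, hab, rfl⟩ := card_eq_two.mp hs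
  rcases rel_or_rel_of_ne r hab with h | h
  · exact ⟨a, by simp, b, by simp, hab, h⟩
  · exact ⟨b, by simp, a, by simp, hab.symm, h⟩

end Relations

section Tournaments

variable {r s : Fin 5 → Fin 5 → Prop}

lemma outDeg_eq_card_filter (r : Fin 5 → Fin 5 → Prop) [DecidableRel r] (v : Fin 5) :
    outDeg r v = #{w | r v w} := by
  rw [outDeg, Nat.card_eq_fintype_card, Fintype.card_subtype]

lemma outDeg_apply_relIso (e : r ≃r s) (v : Fin 5) : outDeg s (e v) = outDeg r v :=
  (Nat.card_congr (e.toEquiv.subtypeEquiv fun _ => e.map_rel_iff.symm)).symm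

namespace IsTournament

lemma of_relIso (hs : IsTournament s) (e : r ≃r s) : IsTournament r := by
  refine ⟨fun a h => hs.1 (e a) (e.map_rel_iff.mpr h), fun a b hab => ?_⟩
  simpa only [e.map_rel_iff] using hs.2 (e a) (e b) (e.injective.ne hab)

lemma asymm (hr : IsTournament r) : Std.Asymm r where
  asymm a b hab hba := by
    have hne : a ≠ b := by
      rintro rfl
      exact hr.1 a hab
    exact ((xor_iff_or_and_not_and _ _).mp (hr.2 a b hne)).2 ⟨hab, hba⟩

lemma trichotomous (hr : IsTournament r) : Std.Trichotomous r where
  trichotomous a b hab hba := by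
    by_contra hne
    exact (Xor.or (hr.2 a b hne)).elim hab hba

lemma sum_outDeg (hr : IsTournament r) : ∑ v, outDeg r v = 10 := by
  classical
  have := hr.asymm
  have := hr.trichotomous
  simp only [outDeg_eq_card_filter, sum_card_filter_eq_choose_two]
  rfl

lemma outDeg_le_four (hr : IsTournament r) (v : Fin 5) : outDeg r v ≤ 4 := by
  classical
  rw [outDeg_eq_card_filter]
  exact Nat.le_of_lt_succ (card_lt_univ_of_notMem (x := v) (by simpa using hr.1 v))

end IsTournament

/-- The transitive tournament on `0 < 1 < 2 < 3 < 4` with the arc between its two ends reversed; the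
representative of the single isomorphism class forming `Γ₁,₁`. -/
def reversedEnds (i j : Fin 5) : Prop :=
  (i < j ∧ ¬ (i = 0 ∧ j = 4)) ∨ (i = 4 ∧ j = 0)

instance : DecidableRel reversedEnds := fun i j =>
  inferInstanceAs (Decidable ((i < j ∧ ¬ (i = 0 ∧ j = 4)) ∨ (i = 4 ∧ j = 0)))

lemma isTournament_reversedEnds : IsTournament reversedEnds :=
  ⟨by decide, (by decide : ∀ i j, i ≠ j → Xor (reversedEnds i j) (reversedEnds j i))⟩

lemma outDeg_reversedEnds (i : Fin 5) : outDeg reversedEnds i = ![3, 3, 2, 1, 1] i := by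
  rw [outDeg_eq_card_filter]
  decide +revert

lemma apply_eq_of_automorphism (f : reversedEnds ≃r reversedEnds) (i : Fin 5) : f i = i := by
  have outDeg_apply (i : Fin 5) : outDeg reversedEnds (f i) = ![3, 3, 2, 1, 1] i := by
    rw [outDeg_apply_relIso, outDeg_reversedEnds]
  simp only [outDeg_reversedEnds] at outDeg_apply
  have score_three_arc : ∀ x y, reversedEnds x y → ![3, 3, 2, 1, 1] x = 3 →
      ![3, 3, 2, 1, 1] y = 3 → x = 0 ∧ y = 1 := by decide
  have score_one_arc : ∀ x y, reversedEnds x y → ![3, 3, 2, 1, 1] x = 1 →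
      ![3, 3, 2, 1, 1] y = 1 → x = 3 ∧ y = 4 := by decide
  have score_two : ∀ x : Fin 5, ![3, 3, 2, 1, 1] x = 2 → x = 2 := by decide
  obtain ⟨h0, h1⟩ := score_three_arc _ _ (f.map_rel_iff.mpr (by decide : reversedEnds 0 1))
    (outDeg_apply 0) (outDeg_apply 1)
  obtain ⟨h3, h4⟩ := score_one_arc _ _ (f.map_rel_iff.mpr (by decide : reversedEnds 3 4))
    (outDeg_apply 3) (outDeg_apply 4)
  have h2 := score_two _ (outDeg_apply 2)
  fin_cases i <;> assumption

instance : Subsingleton (reversedEnds ≃r reversedEnds) where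
  allEq f g := by
    ext i
    rw [apply_eq_of_automorphism f, apply_eq_of_automorphism g]

lemma outDeg_eq_sum_five (r : Fin 5 → Fin 5 → Prop) [DecidableRel r] (v : Fin 5) :
    outDeg r v = (if r v 0 then 1 else 0) + (if r v 1 then 1 else 0) + (if r v 2 then 1 else 0) +
      (if r v 3 then 1 else 0) + (if r v 4 then 1 else 0) := by
  rw [outDeg_eq_card_filter, card_filter, Fin.sum_univ_five]

lemma IsTournament.eq_reversedEnds (hr : IsTournament r)
    (hdeg : ∀ i, outDeg r i = ![3, 3, 2, 1, 1] i)
    (h01 : r 0 1) (h02 : r 0 2) (h12 : r 1 2) (h34 : r 3 4) : r = reversedEnds := by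
  classical
  have := hr.asymm
  have := hr.trichotomous
  have := isTournament_reversedEnds.trichotomous
  have deg0 : outDeg r 0 = 3 := hdeg 0
  have deg1 : outDeg r 1 = 3 := hdeg 1
  have deg2 : outDeg r 2 = 2 := hdeg 2
  have deg3 : outDeg r 3 = 1 := hdeg 3
  rw [outDeg_eq_sum_five] at deg0 deg1 deg2 deg3
  have h10 : ¬ r 1 0 := asymm_of r h01
  have h20 : ¬ r 2 0 := asymm_of r h02
  have h21 : ¬ r 2 1 := asymm_of r h12
  have ⟨h23, h24⟩ : r 2 3 ∧ r 2 4 := by grind only [hr.1 2]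
  have ⟨h13, h14⟩ : r 1 3 ∧ r 1 4 := by grind only [hr.1 1]
  have h30 : ¬ r 3 0 := by grind only
  have h03 : r 0 3 := (rel_or_rel_of_ne r (by decide)).resolve_right h30
  have h04 : ¬ r 0 4 := by grind only
  have h40 : r 4 0 := (rel_or_rel_of_ne r (by decide)).resolve_left h04
  refine (eq_of_le_of_trichotomous_of_asymm fun i j hij => ?_).symm
  fin_cases i <;> fin_cases j <;> first
    | assumption
    | exact absurd hij (by decide)

/-- The class `Γ₁,₁` of tournaments on `Fin 5`, with signatures encoded by their first entry, the
out-degree. -/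
def IsGamma11 (r : Fin 5 → Fin 5 → Prop) : Prop :=
  IsTournament r ∧ (¬ ∃ w, outDeg r w = 4) ∧ (¬ ∃ l, outDeg r l = 0) ∧
    (∃ v, outDeg r v = 2 ∧ (∀ u, outDeg r u = 2 → u = v) ∧ (∀ u, outDeg r u = 3 → r u v))

lemma isGamma11_reversedEnds : IsGamma11 reversedEnds := by
  refine ⟨isTournament_reversedEnds, ?_⟩
  simp only [outDeg_reversedEnds]
  decide

namespace IsGamma11

lemma of_relIso (hs : IsGamma11 s) (e : r ≃r s) : IsGamma11 r := by
  obtain ⟨hs, no_winner, no_loser, v, hv, v_unique, v_majorized⟩ := hs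
  simp only [IsGamma11, ← outDeg_apply_relIso e, ← e.map_rel_iff]
  refine ⟨hs.of_relIso e, fun ⟨w, hw⟩ => no_winner ⟨_, hw⟩, fun ⟨l, hl⟩ => no_loser ⟨_, hl⟩,
    e.symm v, ?_, ?_, ?_⟩
  · rwa [e.apply_symm_apply]
  · exact fun u hu => e.eq_symm_apply.mpr (v_unique _ hu)
  · rw [e.apply_symm_apply]
    exact fun u => v_majorized _

lemma outDeg_eq_one_or_two_or_three (hr : IsGamma11 r) (v : Fin 5) :
    outDeg r v = 1 ∨ outDeg r v = 2 ∨ outDeg r v = 3 := by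
  obtain ⟨ht, no_winner, no_loser, -⟩ := hr
  have le_four := ht.outDeg_le_four v
  have ne_four : outDeg r v ≠ 4 := fun h => no_winner ⟨v, h⟩
  have ne_zero : outDeg r v ≠ 0 := fun h => no_loser ⟨v, h⟩
  lia

lemma card_outDeg_eq_one_and_card_outDeg_eq_three (hr : IsGamma11 r) :
    #{v | outDeg r v = 1} = 2 ∧ #{v | outDeg r v = 3} = 2 := by
  have scores := hr.outDeg_eq_one_or_two_or_three
  have card_two : #{v | outDeg r v = 2} = 1 := by
    obtain ⟨-, -, -, v, hv, v_unique, -⟩ := hr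
    refine card_eq_one.mpr ⟨v, ?_⟩
    ext u
    simp only [mem_filter_univ, mem_singleton]
    exact ⟨v_unique u, fun h => h ▸ hv⟩
  have count_vertices :
      #{v | outDeg r v = 1} + #{v | outDeg r v = 2} + #{v | outDeg r v = 3} = 5 := by
    simp only [card_filter, ← sum_add_distrib]
    rw [sum_congr rfl (g := fun _ => 1) fun v _ => by grind]
    simp
  have count_arcs :
      #{v | outDeg r v = 1} + 2 * #{v | outDeg r v = 2} + 3 * #{v | outDeg r v = 3} = 10 := by
    simp only [card_filter, mul_sum, ← sum_add_distrib]
    rw [← hr.1.sum_outDeg]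
    exact sum_congr rfl fun v _ => by grind
  lia

lemma nonempty_relIso_reversedEnds (hr : IsGamma11 r) : Nonempty (r ≃r reversedEnds) := by
  have := hr.1.trichotomous
  obtain ⟨one_card, three_card⟩ := hr.card_outDeg_eq_one_and_card_outDeg_eq_three
  obtain ⟨c, hc, d, hd, hcd_ne, hcd⟩ := exists_rel_of_card_eq_two r one_card
  obtain ⟨a, ha, b, hb, hab_ne, hab⟩ := exists_rel_of_card_eq_two r three_card
  obtain ⟨ht, -, -, v, hv, -, v_majorized⟩ := hr
  simp only [mem_filter_univ] at ha hb hc hd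
  have nodup : [a, b, v, c, d].Nodup := by
    simp only [List.nodup_cons, List.mem_cons, List.not_mem_nil, List.nodup_nil]
    grind only
  have label_injective : Function.Injective ![a, b, v, c, d] := List.nodup_ofFn.mp nodup
  let label : Fin 5 ≃ Fin 5 := .ofBijective _ (Finite.injective_iff_bijective.mp label_injective)
  have relabelled_eq : label ⁻¹'o r = reversedEnds :=
    (ht.of_relIso (.preimage label r)).eq_reversedEnds
      (fun i => by
        rw [← outDeg_apply_relIso (.preimage label r)]
        fin_cases i <;> assumption)
      hab (v_majorized a ha) (v_majorized b hb) hcd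
  exact ⟨relabelled_eq ▸ (RelIso.preimage label r).symm⟩

end IsGamma11

lemma isGamma11_iff_nonempty_relIso : IsGamma11 r ↔ Nonempty (r ≃r reversedEnds) :=
  ⟨IsGamma11.nonempty_relIso_reversedEnds, fun ⟨e⟩ => isGamma11_reversedEnds.of_relIso e⟩

end Tournaments

/-- exactly 120 tournaments on Fin 5 have no vertex of out-degree 4,
no vertex of out-degree 0, exactly one vertex v of out-degree 2, and both vertices
of out-degree 3 defeat v (the class Γ₁,₁). -/
theorem count_Gamma11 :
    Nat.card {r : Fin 5 → Fin 5 → Prop //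
      IsTournament r ∧ (¬ ∃ w, outDeg r w = 4) ∧ (¬ ∃ l, outDeg r l = 0) ∧
      (∃ v, outDeg r v = 2 ∧ (∀ u, outDeg r u = 2 → u = v) ∧
        (∀ u, outDeg r u = 3 → r u v))} = 120 := by
  have automorphism_card : Nat.card (reversedEnds ≃r reversedEnds) = 1 := Nat.card_unique
  calc Nat.card {r // IsGamma11 r}
      = Nat.card {r : Fin 5 → Fin 5 → Prop // Nonempty (r ≃r reversedEnds)} := by
        simp only [isGamma11_iff_nonempty_relIso]
    _ = Nat.card (Equiv.Perm (Fin 5)) := by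
        rw [← card_isomorphic_mul_card_automorphism reversedEnds, automorphism_card, mul_one]
    _ = 120 := by
        rw [Nat.card_perm, Nat.card_fin]
        rfl
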